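/- arXiv:2312.06314 — 2 statements merged into one kernel-verified Lean document; each statement's English description precedes it below -/
import Mathlib

section
/- Let G be a simple graph, let w be a walk in G from u to v, and let S be a finite set of vertices each lying on w (S is contained in the support of w). Then the length of w is at least the minimum, over all duplicate-free lists (t_1,…,t_k) enumerating exactly the elements of S, of the chained distance dist(u,t_1) + Σ_{j=1}^{k−1} dist(t_j,t_{j+1}) + dist(t_k,v). In other words, the optimal Hamiltonian-path cost from u through S to v in the metric closure of G is an admissible (never overestimating) lower bound on the cost of any walk from u to v that visits all of S. -/
/-- The chained distance `dist(u, t₁) + Σ_{j} dist(t_j, t_{j+1}) + dist(t_k, v)`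
through a list of intermediate vertices, equal to `dist(u, v)` when the list is
empty.  This is the cost of the Hamiltonian path `u, t₁, …, t_k, v` in the
metric closure (target graph) of `G`. -/
noncomputable def chainedDist {V : Type*} (G : SimpleGraph V) : V → List V → V → ℕ
  | u, [], v => G.dist u v
  | u, t :: ts, v => G.dist u t + chainedDist G t ts v

/-! Enumerate `S` in the order in which `w` last visits its elements. These visits cut `w` into
consecutive stretches, and each term of the chained distance is at most the length of the stretch
joining its two endpoints. -/

theorem exists_nodup_sublist_mem_iff {α : Type*} {L : List α} {S : Finset α}
    (hS : ∀ x ∈ S, x ∈ L) : ∃ l : List α, l.Sublist L ∧ l.Nodup ∧ ∀ x, x ∈ l ↔ x ∈ S := by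
  classical
  exact ⟨L.dedup.filter (· ∈ S), List.filter_sublist.trans L.dedup_sublist, L.nodup_dedup.filter _,
    fun x => by simpa using hS x⟩

section

variable {V : Type*} {G : SimpleGraph V}

theorem chainedDist_le_dist_add {u u' : V} (h : G.Reachable u u') (l : List V) (v : V) :
    chainedDist G u l v ≤ G.dist u u' + chainedDist G u' l v := by
  cases l with
  | nil => exact h.dist_triangle_left v
  | cons t ts =>
    calc chainedDist G u (t :: ts) v
        = G.dist u t + chainedDist G t ts v := rfl
      _ ≤ (G.dist u u' + G.dist u' t) + chainedDist G t ts v := by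
          gcongr
          exact h.dist_triangle_left t
      _ = G.dist u u' + chainedDist G u' (t :: ts) v := Nat.add_assoc _ _ _

theorem chainedDist_cons_self (u : V) (l : List V) (v : V) :
    chainedDist G u (u :: l) v = chainedDist G u l v := by
  rw [chainedDist, SimpleGraph.dist_self, Nat.zero_add]

theorem chainedDist_le_walk_length_of_sublist_support {u v : V} (w : G.Walk u v)
    {l : List V} (hl : l.Sublist w.support) : chainedDist G u l v ≤ w.length := by
  induction w generalizing l with
  | @nil u =>
    have hnil : chainedDist G u [] u ≤ 0 := SimpleGraph.dist_self.le
    obtain rfl | rfl := List.sublist_singleton.mp hl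
    · exact hnil
    · exact (chainedDist_cons_self u [] u).trans_le hnil
  | @cons u b v hadj p ih =>
    have of_sublist_tail {l' : List V} (hl' : l'.Sublist p.support) :
        chainedDist G u l' v ≤ (SimpleGraph.Walk.cons hadj p).length :=
      calc chainedDist G u l' v
          ≤ G.dist u b + chainedDist G b l' v := chainedDist_le_dist_add hadj.reachable l' v
        _ ≤ 1 + p.length := Nat.add_le_add (SimpleGraph.dist_eq_one_iff_adj.mpr hadj).le (ih hl')
        _ = (SimpleGraph.Walk.cons hadj p).length := Nat.add_comm _ _
    rw [SimpleGraph.Walk.support_cons] at hl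
    obtain hl | ⟨l', rfl, hl'⟩ := List.sublist_cons_iff.mp hl
    · exact of_sublist_tail hl
    · exact (chainedDist_cons_self u l' v).trans_le (of_sublist_tail hl')

end

/-- If a walk `w` from `u` to `v` visits every vertex of a finite set `S`, then
the length of `w` is at least the minimum, over all duplicate-free lists
enumerating exactly the elements of `S`, of the chained distance from `u`
through the list to `v`: the optimal Hamiltonian-path cost in the metric
closure of `G` is an admissible lower bound. -/
theorem sInf_chainedDist_le_walk_length
    {V : Type*} [DecidableEq V] (G : SimpleGraph V)
    {u v : V} (w : G.Walk u v) (S : Finset V)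
    (hS : ∀ x ∈ S, x ∈ w.support) :
    sInf {n : ℕ | ∃ l : List V, l.Nodup ∧ (∀ x, x ∈ l ↔ x ∈ S) ∧
        n = chainedDist G u l v} ≤ w.length := by
  obtain ⟨l, hsub, hnodup, hmem⟩ := exists_nodup_sublist_mem_iff hS
  exact le_trans (Nat.sInf_le ⟨l, hnodup, hmem, rfl⟩)
    (chainedDist_le_walk_length_of_sublist_support w hsub)
end

section
/- (Admissibility of the min-max MHPP heuristic.) Let G be a connected finite simple graph with unit edge costs, let there be N agents with start vertices o_1,…,o_N, a goal set V_d of vertices, M target vertices t_1,…,t_M, and eligibility sets f_A(v) ⊆ {1,…,N} for each vertex v. Suppose for each agent i there is a walk w_i in G from o_i to δ(i), where δ is an injective goal assignment with δ(i) ∈ V_d and i ∈ f_A(δ(i)), and suppose every target is covered: for each m there exists an agent i ∈ f_A(t_m) with t_m on the walk w_i. Then the makespan max_{i} length(w_i) is at least the optimal min-max multi-agent Hamiltonian path value: the minimum, over all target assignments ψ : {1,…,M} → {1,…,N} with ψ(m) ∈ f_A(t_m), all injective goal assignments δ' with δ'(i) ∈ V_d and i ∈ f_A(δ'(i)), and all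 orderings (duplicate-free lists) σ_i enumerating ψ^{-1}(i) for each agent i, of max_i [the chained distance from o_i through σ_i to δ'(i)]. -/
/-!
A walk of an agent passes through every target it covers, so assign each target to an eligible agent
covering it, and let each agent visit its targets in the order in which they occur on its walk.
Prepending one edge to a walk costs one, while by the triangle inequality it raises the chained
distance by at most one; hence the chained distance of each agent is at most the length of its walk.
-/

section

variable {V : Type*} {G : SimpleGraph V} {u v : V}

theorem chainedDist_le_dist_add_chainedDist
    (huv : G.Reachable u v) (l : List V) (w : V) :
    chainedDist G u l w ≤ G.dist u v + chainedDist G v l w := by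
  cases l with
  | nil => exact huv.dist_triangle_left w
  | cons x l =>
    calc G.dist u x + chainedDist G x l w
        ≤ G.dist u v + G.dist v x + chainedDist G x l w := by
          gcongr
          exact huv.dist_triangle_left x
      _ = G.dist u v + (G.dist v x + chainedDist G x l w) := add_assoc ..

theorem chainedDist_le_length_of_sublist_support
    (p : G.Walk u v) {l : List V} (hl : l.Sublist p.support) :
    chainedDist G u l v ≤ p.length := by
  induction p generalizing l with
  | nil => rcases List.sublist_singleton.mp hl with rfl | rfl <;> simp [chainedDist]
  | @cons u u' v h p ih =>
    have prepend_edge {r : List V} (hr : r.Sublist p.support) :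
        chainedDist G u r v ≤ (p.cons h).length :=
      calc chainedDist G u r v
          ≤ G.dist u u' + chainedDist G u' r v :=
            chainedDist_le_dist_add_chainedDist h.reachable r v
        _ ≤ 1 + p.length := Nat.add_le_add (SimpleGraph.dist_eq_one_iff_adj.mpr h).le (ih hr)
        _ = (p.cons h).length := by rw [SimpleGraph.Walk.length_cons, add_comm]
    rw [SimpleGraph.Walk.support_cons, List.sublist_cons_iff] at hl
    rcases hl with hl | ⟨r, rfl, hr⟩
    · exact prepend_edge hl
    · simpa only [chainedDist, SimpleGraph.dist_self, zero_add] using prepend_edge hr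

theorem exists_nodup_chainedDist_le_length
    (p : G.Walk u v) {S : Set V} (hS : ∀ x ∈ S, x ∈ p.support) :
    ∃ l : List V, l.Nodup ∧ (∀ x, x ∈ l ↔ x ∈ S) ∧ chainedDist G u l v ≤ p.length := by
  classical
  refine ⟨(p.support.filter (· ∈ S)).dedup, List.nodup_dedup _, fun x => ?_,
    chainedDist_le_length_of_sublist_support p
      ((List.dedup_sublist _).trans List.filter_sublist)⟩
  simpa only [List.mem_dedup, List.mem_filter, decide_eq_true_eq, and_iff_right_iff_imp] using hS x

/-- Exhibiting a solution instead of bounding the infimum avoids the junk values `sInf ∅ = 0` and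
`dist = 0` between unreachable vertices. -/
theorem minmax_mhpp_admissible_general {ι τ : Type*} {o δ : ι → V}
    (t : τ → V) (fA : V → Set ι) (w : ∀ i, G.Walk (o i) (δ i))
    (hcover : ∀ m, ∃ i ∈ fA (t m), t m ∈ (w i).support) :
    ∃ (ψ : τ → ι) (σ : ι → List V),
      (∀ m, ψ m ∈ fA (t m)) ∧
      (∀ i, (σ i).Nodup ∧ ∀ x, x ∈ σ i ↔ ∃ m, ψ m = i ∧ t m = x) ∧
      ∀ i, chainedDist G (o i) (σ i) (δ i) ≤ (w i).length := by
  choose ψ hψ hmem using hcover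
  have hvisited (i : ι) : ∀ x ∈ {x | ∃ m, ψ m = i ∧ t m = x}, x ∈ (w i).support := by
    rintro _ ⟨m, rfl, rfl⟩
    exact hmem m
  choose σ hnodup hσ hle using fun i => exists_nodup_chainedDist_le_length (w i) (hvisited i)
  exact ⟨ψ, σ, hψ, fun i => ⟨hnodup i, hσ i⟩, hle⟩

end

/-- Admissibility of the min-max MHPP heuristic: for any feasible set of
covering walks (one per agent, to distinct eligible goals, collectively
visiting every target via an eligible agent), the makespan
`max_i length(w_i)` is bounded below by the optimal min-max multi-agent
Hamiltonian path value over all eligible target assignments, injective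
eligible goal assignments, and orderings of each agent's assigned targets. -/
theorem minmax_mhpp_admissible
    {V : Type*} [Fintype V] [DecidableEq V] (G : SimpleGraph V)
    (hconn : G.Connected) (N M : ℕ)
    (o : Fin N → V) (Vd : Set V) (t : Fin M → V) (fA : V → Set (Fin N))
    (δ : Fin N → V) (hδinj : Function.Injective δ)
    (hδ : ∀ i, δ i ∈ Vd ∧ i ∈ fA (δ i))
    (w : ∀ i : Fin N, G.Walk (o i) (δ i))
    (hcover : ∀ m : Fin M, ∃ i : Fin N, i ∈ fA (t m) ∧ t m ∈ (w i).support) :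
    sInf {n : ℕ | ∃ (ψ : Fin M → Fin N) (δ' : Fin N → V) (σ : Fin N → List V),
        (∀ m, ψ m ∈ fA (t m)) ∧
        Function.Injective δ' ∧ (∀ i, δ' i ∈ Vd ∧ i ∈ fA (δ' i)) ∧
        (∀ i, (σ i).Nodup ∧ (∀ x, x ∈ σ i ↔ ∃ m, ψ m = i ∧ t m = x)) ∧
        n = Finset.univ.sup (fun i => chainedDist G (o i) (σ i) (δ' i))} ≤
      Finset.univ.sup (fun i => (w i).length) := by
  obtain ⟨ψ, σ, hψ, hσ, hle⟩ := minmax_mhpp_admissible_general t fA w hcover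
  exact le_trans (Nat.sInf_le ⟨ψ, δ, σ, hψ, hδinj, hδ, hσ, rfl⟩)
    (Finset.sup_mono_fun fun i _ => hle i)
end
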